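/- There exists an absolute constant C > 0 such that the following holds. Let p be a polynomial of degree at most d in n variables, let B > 1 and 0 < δ < 1 be real numbers, and let X, X' ∈ ℝ^n with ‖X‖_∞ ≤ B and ‖X − X'‖_∞ < δ. Then |p(X) − p(X')| ≤ δ · |p|_2 · n^{d/2} · (C·B)^d. -/

import Mathlib

open MeasureTheory ProbabilityTheory

/-- The standard Gaussian measure on `ℝ^n`. -/
noncomputable def stdGaussian (n : ℕ) : Measure (Fin n → ℝ) :=
  Measure.pi fun _ => gaussianReal 0 1

/-- `N_Y^θ(X) = cos θ · X + sin θ · Y`. -/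
noncomputable def noisy {n : ℕ} (θ : ℝ) (Y X : Fin n → ℝ) : Fin n → ℝ :=
  Real.cos θ • X + Real.sin θ • Y

/-- The noisy derivative `D_{Y,Z}^θ f (X)`. -/
noncomputable def noisyDeriv {n : ℕ} (θ : ℝ) (Y Z : Fin n → ℝ)
    (f : (Fin n → ℝ) → ℝ) (X : Fin n → ℝ) : ℝ :=
  (f (noisy θ Y X) - f (noisy θ Z X)) / θ

/-- `|f_θ^{(ℓ)}(X)|₂²`, the mean square of the `ℓ`-fold noisy derivative over
independent standard Gaussian directions. -/
noncomputable def derivNormSq (n : ℕ) (θ : ℝ) : ℕ → ((Fin n → ℝ) → ℝ) → (Fin n → ℝ) → ℝ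
  | 0, f, X => (f X) ^ 2
  | (ℓ+1), f, X =>
      ∫ YZ : (Fin n → ℝ) × (Fin n → ℝ),
        derivNormSq n θ ℓ (noisyDeriv θ YZ.1 YZ.2 f) X
        ∂((stdGaussian n).prod (stdGaussian n))

/-- The averaging operator `A^θ f (X) = E_Y[f(N_Y^θ(X))]`. -/
noncomputable def avgOp (n : ℕ) (θ : ℝ) (f : (Fin n → ℝ) → ℝ) (X : Fin n → ℝ) : ℝ :=
  ∫ Y, f (noisy θ Y X) ∂(stdGaussian n)

/-- `q_{ℓ,m}(X) = |p_θ^{(ℓ),m}(X)|₂² = (A^θ)^m |p_θ^{(ℓ)}(X)|₂²`. -/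
noncomputable def qlm (n : ℕ) (θ : ℝ) (p : MvPolynomial (Fin n) ℝ) (ℓ m : ℕ)
    (X : Fin n → ℝ) : ℝ :=
  (avgOp n θ)^[m] (derivNormSq n θ ℓ (fun W => MvPolynomial.eval W p)) X

/-- The Gaussian `L^k` norm of a function on `ℝ^n`. -/
noncomputable def gaussNorm (n : ℕ) (k : ℝ) (p : (Fin n → ℝ) → ℝ) : ℝ :=
  (∫ X, |p X| ^ k ∂(stdGaussian n)) ^ (1 / k)

/-- `f` is a degree-`d` polynomial threshold function on `ℝ^n`. -/
def isPTF (n d : ℕ) (f : (Fin n → ℝ) → ℝ) : Prop :=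
  ∃ p : MvPolynomial (Fin n) ℝ, p.totalDegree ≤ d ∧
    ∀ x, f x = Real.sign (MvPolynomial.eval x p)

/-- `X` is a `k`-independent family of standard Gaussians: any `m ≤ k` distinct
coordinates are jointly distributed as `m` independent standard Gaussians. -/
def kIndepGaussian {Ω : Type} [MeasurableSpace Ω] (n k : ℕ) (P : Measure Ω)
    (X : Ω → (Fin n → ℝ)) : Prop :=
  ∀ m : ℕ, m ≤ k → ∀ ι : Fin m → Fin n, Function.Injective ι →
    Measure.map (fun ω i => X ω (ι i)) P = Measure.pi fun _ : Fin m => gaussianReal 0 1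

/-!
Expand `p = ∑ c_a h_a` in the Hermite polynomials that are orthonormal for the Gaussian measure, so
that `|p|₂² = ∑ c_a²`. For `B ≥ 1` the three-term recurrence gives `|h_k| ≤ (2B)^k` on `[-B, B]`,
and then `h_k' = √k h_{k-1}` makes every multivariate `h_a` of degree at most `d` Lipschitz on the
sup-norm ball of radius `B`, with constant `(4B)^d`. By the Cauchy–Schwarz inequality over the at
most `(d + 1) n^d` multi-indices, `p` is Lipschitz there with constant `|p|₂ n^{d/2} (8B)^d`.
-/

section HermitePolynomials

open Polynomial

theorem derivative_hermite_succ (k : ℕ) :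
    derivative (hermite (k + 1)) = (k + 1 : ℤ[X]) * hermite k := by
  induction k with
  | zero => simp
  | succ k ih =>
    rw [hermite_succ (k + 1), derivative_sub, derivative_mul, ih, derivative_mul, hermite_succ k]
    simp only [derivative_X, derivative_add, derivative_natCast, derivative_one, Nat.cast_add,
      Nat.cast_one]
    ring

theorem hermite_add_two (k : ℕ) :
    hermite (k + 2) = X * hermite (k + 1) - (k + 1 : ℤ[X]) * hermite k := by
  rw [hermite_succ (k + 1), derivative_hermite_succ]

/-- The `k`-th probabilists' Hermite polynomial, as a real function, divided by its
norm `√(k!)` in `L²` of the standard Gaussian measure. -/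
noncomputable def normHermite (k : ℕ) (x : ℝ) : ℝ :=
  aeval x (hermite k) / √(k.factorial)

@[simp]
theorem normHermite_zero (x : ℝ) : normHermite 0 x = 1 := by
  simp [normHermite]

@[simp]
theorem normHermite_one (x : ℝ) : normHermite 1 x = x := by
  simp [normHermite]

theorem sqrt_factorial_succ (k : ℕ) :
    √((k + 1).factorial : ℝ) = √(k + 1) * √(k.factorial) := by
  rw [Nat.factorial_succ, Nat.cast_mul, Nat.cast_succ, Real.sqrt_mul (by positivity)]

theorem hasDerivAt_normHermite_succ (k : ℕ) (x : ℝ) :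
    HasDerivAt (normHermite (k + 1)) (√(k + 1) * normHermite k x) x := by
  refine (((hermite (k + 1)).hasDerivAt_aeval x).div_const _).congr_deriv ?_
  have hk : √((k : ℝ) + 1) ^ 2 = k + 1 := Real.sq_sqrt (by positivity)
  rw [derivative_hermite_succ, normHermite, sqrt_factorial_succ]
  simp only [map_mul, map_add, map_natCast, map_one]
  field_simp
  rw [hk, mul_comm]

theorem sqrt_mul_normHermite_add_two (k : ℕ) (x : ℝ) :
    √(k + 2) * normHermite (k + 2) x =
      x * normHermite (k + 1) x - √(k + 1) * normHermite k x := by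
  have hk : √((k : ℝ) + 1) ^ 2 = k + 1 := Real.sq_sqrt (by positivity)
  have hk₂ : √((k + 2).factorial : ℝ) = √(k + 2) * (√(k + 1) * √(k.factorial)) := by
    rw [sqrt_factorial_succ (k + 1), sqrt_factorial_succ k]
    push_cast
    ring_nf
  simp only [normHermite, hk₂, sqrt_factorial_succ k, hermite_add_two, map_sub, map_mul, aeval_X,
    map_add, map_natCast, map_one]
  field_simp
  rw [hk, mul_comm (aeval x _)]

theorem mul_normHermite (k : ℕ) (x : ℝ) :
    x * normHermite k x =
      √(k + 1) * normHermite (k + 1) x + √k * normHermite (k - 1) x := by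
  cases k with
  | zero => simp
  | succ k =>
    have h := sqrt_mul_normHermite_add_two k x
    push_cast
    rw [add_assoc (k : ℝ), one_add_one_eq_two, h]
    exact (sub_add_cancel _ _).symm

theorem abs_normHermite_le {B x : ℝ} (hB : 1 ≤ B) (hx : |x| ≤ B) (k : ℕ) :
    |normHermite k x| ≤ (2 * B) ^ k := by
  induction k using Nat.twoStepInduction with
  | zero => simp
  | one => simpa using hx.trans (by linarith)
  | more k ih₀ ih₁ =>
    have hk : (1 : ℝ) ≤ √(k + 2) := Real.one_le_sqrt.2 (by linarith [k.cast_nonneg (α := ℝ)])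
    have hk' : √((k : ℝ) + 1) ≤ √(k + 2) := Real.sqrt_le_sqrt (by linarith)
    have hB₂ : B * (2 * B) + 1 ≤ (2 * B) ^ 2 := by nlinarith
    refine le_of_mul_le_mul_left ?_ (one_pos.trans_le hk)
    calc √(k + 2) * |normHermite (k + 2) x|
        = |x * normHermite (k + 1) x - √(k + 1) * normHermite k x| := by
          rw [← sqrt_mul_normHermite_add_two, abs_mul, abs_of_nonneg (Real.sqrt_nonneg _)]
      _ ≤ |x| * |normHermite (k + 1) x| + √(k + 1) * |normHermite k x| := by
          refine (abs_sub _ _).trans_eq ?_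
          rw [abs_mul, abs_mul, abs_of_nonneg (Real.sqrt_nonneg _)]
      _ ≤ B * (2 * B) ^ (k + 1) + √(k + 1) * (2 * B) ^ k := by gcongr
      _ ≤ √(k + 2) * (B * (2 * B) ^ (k + 1)) + √(k + 2) * (2 * B) ^ k :=
          add_le_add (le_mul_of_one_le_left (by positivity) hk) (by gcongr)
      _ = √(k + 2) * ((2 * B) ^ k * (B * (2 * B) + 1)) := by ring
      _ ≤ √(k + 2) * ((2 * B) ^ k * (2 * B) ^ 2) := by gcongr
      _ = √(k + 2) * (2 * B) ^ (k + 2) := by rw [pow_add]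

theorem abs_normHermite_sub_le {B x y : ℝ} (hB : 1 ≤ B) (hx : |x| ≤ B) (hy : |y| ≤ B) (k : ℕ) :
    |normHermite k x - normHermite k y| ≤ k * (2 * B) ^ k * |x - y| := by
  cases k with
  | zero => simp
  | succ k =>
    have hderiv : ∀ z ∈ Metric.closedBall (0 : ℝ) B,
        ‖√(k + 1) * normHermite k z‖ ≤ (k + 1 : ℕ) * (2 * B) ^ (k + 1) := fun z hz ↦ by
      have hk : √((k : ℝ) + 1) ≤ (k + 1 : ℕ) := by
        push_cast
        exact (Real.sqrt_le_left (by positivity)).2 (by nlinarith [k.cast_nonneg (α := ℝ)])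
      have hpow : (2 * B) ^ k ≤ (2 * B) ^ (k + 1) := pow_le_pow_right₀ (by linarith) k.le_succ
      rw [norm_mul, Real.norm_of_nonneg (Real.sqrt_nonneg _)]
      have hz' := (abs_normHermite_le hB (mem_closedBall_zero_iff.1 hz) k).trans hpow
      exact mul_le_mul hk hz' (norm_nonneg _) (Nat.cast_nonneg _)
    exact (convex_closedBall (0 : ℝ) B).norm_image_sub_le_of_norm_hasDerivWithin_le
      (fun z _ ↦ (hasDerivAt_normHermite_succ k z).hasDerivWithinAt) hderiv
      (mem_closedBall_zero_iff.2 hy) (mem_closedBall_zero_iff.2 hx)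

end HermitePolynomials

section GaussianIntegrationByParts

open scoped NNReal

variable {μ : ℝ} {v : ℝ≥0}

theorem hasDerivAt_gaussianPDFReal (x : ℝ) :
    HasDerivAt (gaussianPDFReal μ v) (-((x - μ) / v) * gaussianPDFReal μ v x) x := by
  have hexponent : HasDerivAt (fun y : ℝ ↦ -(y - μ) ^ 2 / (2 * v)) (-((x - μ) / v)) x := by
    refine ((((hasDerivAt_id x).sub_const μ).pow 2).neg.div_const (2 * (v : ℝ))).congr_deriv ?_
    simp only [id_eq]
    ring
  rw [gaussianPDFReal_def]
  exact (hexponent.exp.const_mul _).congr_deriv (by ring)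

theorem integrable_gaussianReal_iff {f : ℝ → ℝ} (hv : v ≠ 0) :
    Integrable f (gaussianReal μ v) ↔ Integrable (fun x ↦ gaussianPDFReal μ v x * f x) := by
  rw [gaussianReal_of_var_ne_zero μ hv, integrable_withDensity_iff_integrable_smul'
    (measurable_gaussianPDF μ v) (by simp [gaussianPDF])]
  simp only [toReal_gaussianPDF, smul_eq_mul]

theorem integral_sub_mul_gaussianReal {f f' : ℝ → ℝ} (hf : ∀ x, HasDerivAt f (f' x) x)
    (hf_int : Integrable f (gaussianReal μ v)) (hf'_int : Integrable f' (gaussianReal μ v))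
    (hmul_int : Integrable (fun x ↦ (x - μ) * f x) (gaussianReal μ v)) :
    ∫ x, (x - μ) * f x ∂gaussianReal μ v = v * ∫ x, f' x ∂gaussianReal μ v := by
  rcases eq_or_ne v 0 with rfl | hv
  · simp [gaussianReal_zero_var]
  have hv' : (v : ℝ) ≠ 0 := NNReal.coe_ne_zero.2 hv
  rw [integrable_gaussianReal_iff hv] at hf_int hf'_int hmul_int
  have hparts := integral_mul_deriv_eq_deriv_mul_of_integrable (fun x _ ↦ hf x)
    (fun x _ ↦ hasDerivAt_gaussianPDFReal (μ := μ) (v := v) x)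
    ((hmul_int.const_mul (-(v : ℝ)⁻¹)).congr (.of_forall fun x ↦ by simp; ring))
    (hf'_int.congr (.of_forall fun x ↦ by simp [mul_comm]))
    (hf_int.congr (.of_forall fun x ↦ by simp [mul_comm]))
  simp only [integral_gaussianReal_eq_integral_smul hv, smul_eq_mul]
  calc ∫ x, gaussianPDFReal μ v x * ((x - μ) * f x)
      = ∫ x, -(v : ℝ) * (f x * (-((x - μ) / v) * gaussianPDFReal μ v x)) := by
        congr with x
        field_simp
    _ = v * ∫ x, gaussianPDFReal μ v x * f' x := by
        rw [integral_const_mul, hparts, neg_mul_neg]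
        simp only [mul_comm]

variable {R : Type*} [CommSemiring R] [Algebra R ℝ]

open Polynomial

theorem integrable_aeval_gaussianReal (p : R[X]) :
    Integrable (fun x ↦ aeval x p) (gaussianReal μ v) := by
  induction p using Polynomial.induction_on' with
  | add p q hp hq =>
    simp only [map_add]
    exact hp.add hq
  | monomial n a =>
    simp only [aeval_monomial]
    have hpow := (memLp_id_gaussianReal (μ := μ) (v := v) n).integrable_norm_pow'
    exact (hpow.mono' (by fun_prop) (by simp)).const_mul _

theorem integral_sub_mul_aeval_gaussianReal (p : R[X]) :
    ∫ x, (x - μ) * aeval x p ∂gaussianReal μ v =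
      v * ∫ x, aeval x (derivative p) ∂gaussianReal μ v := by
  refine integral_sub_mul_gaussianReal (p.hasDerivAt_aeval ·) (integrable_aeval_gaussianReal p)
    (integrable_aeval_gaussianReal _) ?_
  have hX := integrable_aeval_gaussianReal (μ := μ) (v := v) (X * p)
  refine (hX.sub ((integrable_aeval_gaussianReal p).const_mul μ)).congr (.of_forall fun x ↦ ?_)
  simp [sub_mul]

theorem integral_hermite_succ_mul_aeval (k : ℕ) (p : ℤ[X]) :
    ∫ x, aeval x (hermite (k + 1)) * aeval x p ∂gaussianReal 0 1 =
      ∫ x, aeval x (hermite k) * aeval x (derivative p) ∂gaussianReal 0 1 := by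
  have h_integrable (q : ℤ[X]) : Integrable (fun x ↦ aeval x q) (gaussianReal 0 1) :=
    integrable_aeval_gaussianReal q
  have hstein : ∫ x, aeval x (X * (hermite k * p)) ∂gaussianReal 0 1 =
      ∫ x, aeval x (derivative (hermite k * p)) ∂gaussianReal 0 1 := by
    simpa using integral_sub_mul_aeval_gaussianReal (μ := 0) (v := 1) (hermite k * p)
  simp only [← map_mul]
  calc ∫ x, aeval x (hermite (k + 1) * p) ∂gaussianReal 0 1
      = ∫ x, (aeval x (X * (hermite k * p)) - aeval x (derivative (hermite k) * p))
          ∂gaussianReal 0 1 := by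
        simp only [← map_sub, hermite_succ, sub_mul, mul_assoc]
    _ = ∫ x, (aeval x (derivative (hermite k * p)) - aeval x (derivative (hermite k) * p))
          ∂gaussianReal 0 1 := by
        rw [integral_sub (h_integrable _) (h_integrable _), hstein,
          integral_sub (h_integrable _) (h_integrable _)]
    _ = ∫ x, aeval x (hermite k * derivative p) ∂gaussianReal 0 1 := by
        simp only [← map_sub, derivative_mul, add_sub_cancel_left]

theorem integral_hermite_mul_hermite (j k : ℕ) :
    ∫ x, aeval x (hermite j) * aeval x (hermite k) ∂gaussianReal 0 1 =
      if j = k then (k.factorial : ℝ) else 0 := by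
  induction k generalizing j with
  | zero =>
    cases j with
    | zero => simp
    | succ j => simpa [-hermite_succ] using integral_hermite_succ_mul_aeval j 1
  | succ k ih =>
    cases j with
    | zero =>
      simp only [mul_comm (aeval _ (hermite 0)), integral_hermite_succ_mul_aeval]
      simp
    | succ j =>
      rw [integral_hermite_succ_mul_aeval, derivative_hermite_succ]
      simp only [map_mul, map_add, map_natCast, map_one, mul_left_comm _ ((k : ℝ) + 1),
        integral_const_mul, ih, Nat.add_right_cancel_iff, Nat.factorial_succ]
      simp

theorem integral_normHermite_mul_normHermite (j k : ℕ) :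
    ∫ x, normHermite j x * normHermite k x ∂gaussianReal 0 1 = if j = k then 1 else 0 := by
  simp only [normHermite, div_mul_div_comm, integral_div, integral_hermite_mul_hermite]
  split_ifs with h
  · have hk : (k.factorial : ℝ) ≠ 0 := by positivity
    rw [h, Real.mul_self_sqrt (Nat.cast_nonneg _), div_self hk]
  · exact zero_div _

theorem integrable_normHermite_mul_normHermite (j k : ℕ) :
    Integrable (fun x ↦ normHermite j x * normHermite k x) (gaussianReal 0 1) := by
  simp only [normHermite, div_mul_div_comm, ← map_mul]
  exact (integrable_aeval_gaussianReal _).div_const _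

end GaussianIntegrationByParts

theorem norm_prod_sub_prod_le {ι 𝕜 : Type*} [NormedField 𝕜] (s : Finset ι) {u v : ι → 𝕜}
    {a w : ι → ℝ} (hu : ∀ i ∈ s, ‖u i‖ ≤ w i) (hv : ∀ i ∈ s, ‖v i‖ ≤ w i)
    (huv : ∀ i ∈ s, ‖u i - v i‖ ≤ a i * w i) :
    ‖∏ i ∈ s, u i - ∏ i ∈ s, v i‖ ≤ (∑ i ∈ s, a i) * ∏ i ∈ s, w i := by
  induction s using Finset.cons_induction with
  | empty => simp
  | cons i s hi ih =>
    simp only [Finset.forall_mem_cons] at hu hv huv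
    have hprod : ‖∏ j ∈ s, u j‖ ≤ ∏ j ∈ s, w j :=
      (norm_prod _ _).trans_le (Finset.prod_le_prod (fun _ _ ↦ norm_nonneg _) hu.2)
    have hw : 0 ≤ w i := (norm_nonneg _).trans hu.1
    simp only [Finset.prod_cons, Finset.sum_cons]
    calc ‖u i * ∏ j ∈ s, u j - v i * ∏ j ∈ s, v j‖
        = ‖(u i - v i) * ∏ j ∈ s, u j + v i * (∏ j ∈ s, u j - ∏ j ∈ s, v j)‖ := by ring_nf
      _ ≤ ‖u i - v i‖ * ‖∏ j ∈ s, u j‖ + ‖v i‖ * ‖∏ j ∈ s, u j - ∏ j ∈ s, v j‖ := by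
          refine (norm_add_le _ _).trans_eq ?_
          rw [norm_mul, norm_mul]
      _ ≤ a i * w i * ∏ j ∈ s, w j + w i * ((∑ j ∈ s, a j) * ∏ j ∈ s, w j) :=
          add_le_add
            (mul_le_mul huv.1 hprod (norm_nonneg _) ((norm_nonneg _).trans huv.1))
            (mul_le_mul hv.1 (ih hu.2 hv.2 huv.2) (norm_nonneg _) hw)
      _ = (a i + ∑ j ∈ s, a j) * (w i * ∏ j ∈ s, w j) := by ring

section MultiIndices

variable {ι : Type*} [DecidableEq ι]

theorem card_piAntidiag_le (s : Finset ι) (k : ℕ) : (s.piAntidiag k).card ≤ s.card ^ k :=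
  calc (s.piAntidiag k).card
      ≤ ∑ a ∈ s.piAntidiag k, Nat.multinomial s a := by
        rw [Finset.card_eq_sum_ones]
        exact Finset.sum_le_sum fun a _ ↦ Nat.multinomial_pos s a
    _ = s.card ^ k := by
        simpa using (Finset.sum_pow_eq_sum_piAntidiag s (fun _ ↦ (1 : ℕ)) k).symm

variable [Fintype ι]

/-- The multi-indices `a : ι → ℕ` of total degree at most `d`, which label the Hermite basis of
the polynomials of total degree at most `d`. -/
def multiIndices (ι : Type*) [Fintype ι] [DecidableEq ι] (d : ℕ) : Finset (ι → ℕ) :=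
  (Finset.range (d + 1)).biUnion (Finset.univ.piAntidiag ·)

theorem mem_multiIndices {d : ℕ} {a : ι → ℕ} : a ∈ multiIndices ι d ↔ ∑ i, a i ≤ d := by
  simp [multiIndices]

theorem card_multiIndices_le [Nonempty ι] (d : ℕ) :
    (multiIndices ι d).card ≤ (d + 1) * Fintype.card ι ^ d := by
  have hlayer : ∀ k ∈ Finset.range (d + 1),
      (Finset.univ.piAntidiag k : Finset (ι → ℕ)).card ≤ Fintype.card ι ^ d := fun k hk ↦
    (card_piAntidiag_le _ k).trans
      (Nat.pow_le_pow_right Fintype.card_pos (Finset.mem_range_succ_iff.1 hk))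
  simpa [multiIndices] using Finset.card_biUnion_le_card_mul _ _ _ hlayer

theorem sqrt_card_multiIndices_le [Nonempty ι] (d : ℕ) :
    √((multiIndices ι d).card) ≤ 2 ^ d * (Fintype.card ι : ℝ) ^ ((d : ℝ) / 2) := by
  have hd : (d + 1 : ℝ) ≤ (2 ^ d) ^ 2 := by
    have hlt : d + 1 ≤ 2 ^ d := Nat.lt_two_pow_self
    exact_mod_cast hlt.trans (Nat.le_self_pow two_ne_zero _)
  have hcard : ((multiIndices ι d).card : ℝ) ≤ (d + 1) * (Fintype.card ι : ℝ) ^ d :=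
    mod_cast card_multiIndices_le d
  rw [Real.rpow_div_two_eq_sqrt _ (Nat.cast_nonneg _), Real.rpow_natCast]
  refine Real.sqrt_le_iff.2 ⟨by positivity, hcard.trans ?_⟩
  rw [mul_pow, pow_right_comm √_, Real.sq_sqrt (Nat.cast_nonneg _)]
  gcongr

end MultiIndices

section MultivariateHermite

variable {ι : Type*} [Fintype ι]

/-- The multivariate Hermite polynomial with multi-index `a`, as a real function, normalised in
`L²` of the standard Gaussian measure on `ι → ℝ`. -/
noncomputable def normHermitePi (a : ι → ℕ) (x : ι → ℝ) : ℝ :=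
  ∏ i, normHermite (a i) (x i)

theorem integrable_normHermitePi_mul_normHermitePi (a b : ι → ℕ) :
    Integrable (fun x ↦ normHermitePi a x * normHermitePi b x)
      (Measure.pi fun _ : ι ↦ gaussianReal 0 1) := by
  simp only [normHermitePi, ← Finset.prod_mul_distrib]
  exact Integrable.fintype_prod (f := fun i y ↦ normHermite (a i) y * normHermite (b i) y)
    fun i ↦ integrable_normHermite_mul_normHermite (a i) (b i)

theorem integral_normHermitePi_mul_normHermitePi (a b : ι → ℕ) :
    ∫ x, normHermitePi a x * normHermitePi b x ∂Measure.pi (fun _ : ι ↦ gaussianReal 0 1) =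
      if a = b then 1 else 0 := by
  simp only [normHermitePi, ← Finset.prod_mul_distrib]
  rw [integral_fintype_prod_eq_prod fun i y ↦ normHermite (a i) y * normHermite (b i) y]
  simp only [integral_normHermite_mul_normHermite, Finset.prod_ite_zero, Finset.prod_const_one,
    Finset.mem_univ, true_imp_iff, funext_iff]

theorem integral_sum_mul_normHermitePi_sq (s : Finset (ι → ℕ)) (c : (ι → ℕ) → ℝ) :
    ∫ x, (∑ a ∈ s, c a * normHermitePi a x) ^ 2 ∂Measure.pi (fun _ : ι ↦ gaussianReal 0 1) =
      ∑ a ∈ s, c a ^ 2 := by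
  classical
  have h_integrable (a b : ι → ℕ) :=
    (integrable_normHermitePi_mul_normHermitePi a b).const_mul (c a * c b)
  simp only [sq (Finset.sum _ _), Finset.sum_mul_sum, mul_mul_mul_comm]
  rw [integral_finsetSum _ fun _ _ ↦ integrable_finsetSum _ fun _ _ ↦ h_integrable _ _]
  refine Finset.sum_congr rfl fun _ ha ↦ ?_
  rw [integral_finsetSum _ fun _ _ ↦ h_integrable _ _]
  simp [integral_const_mul, integral_normHermitePi_mul_normHermitePi, ha, sq]

theorem abs_normHermitePi_sub_le {B : ℝ} (hB : 1 ≤ B) {x y : ι → ℝ} (hx : ‖x‖ ≤ B) (hy : ‖y‖ ≤ B)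
    (a : ι → ℕ) :
    |normHermitePi a x - normHermitePi a y| ≤ (4 * B) ^ (∑ i, a i) * ‖x - y‖ := by
  have hx' (i : ι) : |x i| ≤ B := (norm_le_pi_norm x i).trans hx
  have hy' (i : ι) : |y i| ≤ B := (norm_le_pi_norm y i).trans hy
  have hfactor (i : ι) : ‖normHermite (a i) (x i) - normHermite (a i) (y i)‖ ≤
      (a i * ‖x - y‖) * (2 * B) ^ a i :=
    calc |normHermite (a i) (x i) - normHermite (a i) (y i)|
        ≤ a i * (2 * B) ^ a i * |x i - y i| := abs_normHermite_sub_le hB (hx' i) (hy' i) (a i)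
      _ ≤ a i * (2 * B) ^ a i * ‖x - y‖ := by
          gcongr
          exact norm_le_pi_norm (x - y) i
      _ = (a i * ‖x - y‖) * (2 * B) ^ a i := by ring
  have hdegree : ((∑ i, a i : ℕ) : ℝ) ≤ 2 ^ (∑ i, a i) := mod_cast Nat.lt_two_pow_self.le
  calc |normHermitePi a x - normHermitePi a y|
      ≤ (∑ i, a i * ‖x - y‖) * ∏ i, (2 * B) ^ a i :=
        norm_prod_sub_prod_le Finset.univ (fun i _ ↦ abs_normHermite_le hB (hx' i) (a i))
          (fun i _ ↦ abs_normHermite_le hB (hy' i) (a i)) fun i _ ↦ hfactor i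
    _ = (∑ i, a i : ℕ) * (2 * B) ^ (∑ i, a i) * ‖x - y‖ := by
        rw [← Finset.sum_mul, Finset.prod_pow_eq_pow_sum]
        push_cast
        ring
    _ ≤ 2 ^ (∑ i, a i) * (2 * B) ^ (∑ i, a i) * ‖x - y‖ := by gcongr
    _ = (4 * B) ^ (∑ i, a i) * ‖x - y‖ := by
        rw [← mul_pow]
        ring_nf

variable [DecidableEq ι]

theorem normHermitePi_update (a : ι → ℕ) (i : ι) (k : ℕ) (x : ι → ℝ) :
    normHermitePi (Function.update a i k) x =
      normHermite k (x i) * ∏ j ∈ Finset.univ.erase i, normHermite (a j) (x j) := by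
  rw [normHermitePi, ← Finset.mul_prod_erase _ _ (Finset.mem_univ i), Function.update_self]
  congr 1
  refine Finset.prod_congr rfl fun j hj ↦ ?_
  rw [Function.update_of_ne (Finset.ne_of_mem_erase hj)]

theorem mul_normHermitePi (a : ι → ℕ) (i : ι) (x : ι → ℝ) :
    x i * normHermitePi a x =
      √(a i + 1) * normHermitePi (Function.update a i (a i + 1)) x +
        √(a i) * normHermitePi (Function.update a i (a i - 1)) x := by
  have ha := normHermitePi_update a i (a i) x
  rw [Function.update_eq_self] at ha
  rw [ha, normHermitePi_update, normHermitePi_update, ← mul_assoc, mul_normHermite]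
  ring

/-- The span of the multivariate Hermite polynomials of total degree at most `d`, as a space of
functions on `ι → ℝ`. -/
noncomputable def hermiteSpan (ι : Type*) [Fintype ι] [DecidableEq ι] (d : ℕ) :
    Submodule ℝ ((ι → ℝ) → ℝ) :=
  Submodule.span ℝ (normHermitePi '' (multiIndices ι d : Set (ι → ℕ)))

theorem normHermitePi_mem_hermiteSpan {d : ℕ} {a : ι → ℕ} (ha : ∑ i, a i ≤ d) :
    normHermitePi a ∈ hermiteSpan ι d :=
  Submodule.subset_span ⟨a, mem_multiIndices.2 ha, rfl⟩

theorem hermiteSpan_mono : Monotone (hermiteSpan ι) := fun _ _ h ↦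
  Submodule.span_mono <| Set.image_mono fun _ ha ↦
    mem_multiIndices.2 ((mem_multiIndices.1 ha).trans h)

theorem coord_mul_mem_hermiteSpan {d : ℕ} (i : ι) {f : (ι → ℝ) → ℝ} (hf : f ∈ hermiteSpan ι d) :
    (fun x ↦ x i) * f ∈ hermiteSpan ι (d + 1) := by
  suffices h : (hermiteSpan ι d).map (LinearMap.mulLeft ℝ (fun x : ι → ℝ ↦ x i)) ≤
      hermiteSpan ι (d + 1) from h (Submodule.mem_map_of_mem hf)
  rw [hermiteSpan, Submodule.map_span_le]
  rintro _ ⟨a, ha, rfl⟩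
  have hrec : (fun x ↦ x i) * normHermitePi a =
      √(a i + 1) • normHermitePi (Function.update a i (a i + 1)) +
        √(a i) • normHermitePi (Function.update a i (a i - 1)) :=
    funext fun x ↦ mul_normHermitePi a i x
  have hsum : a i + ∑ j ∈ Finset.univ \ {i}, a j ≤ d := by
    rw [← Finset.erase_eq, Finset.add_sum_erase _ _ (Finset.mem_univ i)]
    exact mem_multiIndices.1 ha
  rw [LinearMap.mulLeft_apply, hrec]
  refine add_mem (Submodule.smul_mem _ _ (normHermitePi_mem_hermiteSpan ?_))
    (Submodule.smul_mem _ _ (normHermitePi_mem_hermiteSpan ?_)) <;>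
  · rw [Finset.sum_update_of_mem (Finset.mem_univ i)]
    lia

theorem multiset_prod_coord_mem_hermiteSpan (t : Multiset ι) :
    (fun x : ι → ℝ ↦ (t.map x).prod) ∈ hermiteSpan ι t.card := by
  induction t using Multiset.induction_on with
  | empty =>
    have hone : normHermitePi (0 : ι → ℕ) = fun _ ↦ 1 := by
      ext x
      simp [normHermitePi]
    simpa [hone] using normHermitePi_mem_hermiteSpan (a := (0 : ι → ℕ)) (d := 0) (by simp)
  | cons i t ih =>
    simp only [Multiset.map_cons, Multiset.prod_cons, Multiset.card_cons]
    exact coord_mul_mem_hermiteSpan i ih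

theorem eval_mem_hermiteSpan (p : MvPolynomial ι ℝ) :
    (fun x ↦ MvPolynomial.eval x p) ∈ hermiteSpan ι p.totalDegree := by
  have hmonomial (m : ι →₀ ℕ) (x : ι → ℝ) : (m.toMultiset.map x).prod = m.prod (x · ^ ·) := by
    rw [Finsupp.toMultiset_map, Finsupp.prod_toMultiset,
      Finsupp.prod_mapDomain_index pow_zero pow_add]
  have hp : (fun x ↦ MvPolynomial.eval x p) =
      ∑ m ∈ p.support, p.coeff m • fun x : ι → ℝ ↦ (m.toMultiset.map x).prod := by
    ext x
    simp [MvPolynomial.eval_eq, hmonomial, Finsupp.prod]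
  rw [hp]
  refine sum_mem fun m hm ↦ Submodule.smul_mem _ _ ?_
  refine hermiteSpan_mono ?_ (multiset_prod_coord_mem_hermiteSpan m.toMultiset)
  rw [Finsupp.card_toMultiset]
  exact MvPolynomial.le_totalDegree hm

theorem exists_eval_eq_sum_normHermitePi {d : ℕ} {p : MvPolynomial ι ℝ} (hp : p.totalDegree ≤ d) :
    ∃ c : (ι → ℕ) → ℝ, ∀ x,
      MvPolynomial.eval x p = ∑ a ∈ multiIndices ι d, c a * normHermitePi a x := by
  obtain ⟨c, hc⟩ := Submodule.mem_span_image_finset_iff_exists_fun' ℝ |>.1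
    (hermiteSpan_mono hp (eval_mem_hermiteSpan p))
  refine ⟨c, fun x ↦ ?_⟩
  simpa using (congrFun hc x).symm

theorem sum_normHermitePi_sub_sq_le {B : ℝ} (hB : 1 ≤ B) {x y : ι → ℝ} (hx : ‖x‖ ≤ B)
    (hy : ‖y‖ ≤ B) (d : ℕ) :
    ∑ a ∈ multiIndices ι d, (normHermitePi a x - normHermitePi a y) ^ 2 ≤
      (multiIndices ι d).card * ((4 * B) ^ d * ‖x - y‖) ^ 2 := by
  rw [← nsmul_eq_mul]
  refine Finset.sum_le_card_nsmul _ _ _ fun a ha ↦ sq_le_sq.2 ?_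
  calc |normHermitePi a x - normHermitePi a y|
      ≤ (4 * B) ^ (∑ i, a i) * ‖x - y‖ := abs_normHermitePi_sub_le hB hx hy a
    _ ≤ (4 * B) ^ d * ‖x - y‖ := by
        gcongr
        · linarith
        · exact mem_multiIndices.1 ha
    _ ≤ |(4 * B) ^ d * ‖x - y‖| := le_abs_self _

theorem abs_eval_sub_eval_le_sqrt_card {d : ℕ} {p : MvPolynomial ι ℝ} (hp : p.totalDegree ≤ d)
    {B : ℝ} (hB : 1 ≤ B) {x y : ι → ℝ} (hx : ‖x‖ ≤ B) (hy : ‖y‖ ≤ B) :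
    |MvPolynomial.eval x p - MvPolynomial.eval y p| ≤
      √(∫ z, MvPolynomial.eval z p ^ 2 ∂Measure.pi fun _ : ι ↦ gaussianReal 0 1) *
        (√(multiIndices ι d).card * ((4 * B) ^ d * ‖x - y‖)) := by
  obtain ⟨c, hc⟩ := exists_eval_eq_sum_normHermitePi hp
  simp only [hc, integral_sum_mul_normHermitePi_sq]
  calc |∑ a ∈ multiIndices ι d, c a * normHermitePi a x -
          ∑ a ∈ multiIndices ι d, c a * normHermitePi a y|
      = |∑ a ∈ multiIndices ι d, c a * (normHermitePi a x - normHermitePi a y)| := by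
        simp only [mul_sub, Finset.sum_sub_distrib]
    _ ≤ √((∑ a ∈ multiIndices ι d, c a ^ 2) *
          ∑ a ∈ multiIndices ι d, (normHermitePi a x - normHermitePi a y) ^ 2) :=
        Real.abs_le_sqrt (Finset.sum_mul_sq_le_sq_mul_sq _ _ _)
    _ ≤ √((∑ a ∈ multiIndices ι d, c a ^ 2) *
          ((multiIndices ι d).card * ((4 * B) ^ d * ‖x - y‖) ^ 2)) := by
        gcongr
        exact sum_normHermitePi_sub_sq_le hB hx hy d
    _ = √(∑ a ∈ multiIndices ι d, c a ^ 2) *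
          (√(multiIndices ι d).card * ((4 * B) ^ d * ‖x - y‖)) := by
        rw [Real.sqrt_mul (by positivity), Real.sqrt_mul (by positivity),
          Real.sqrt_sq (by positivity)]

end MultivariateHermite

theorem gaussNorm_two (n : ℕ) (f : (Fin n → ℝ) → ℝ) :
    gaussNorm n 2 f = √(∫ x, f x ^ 2 ∂Measure.pi fun _ : Fin n ↦ gaussianReal 0 1) := by
  simp only [gaussNorm, Real.rpow_two, sq_abs, Real.sqrt_eq_rpow, _root_.stdGaussian]

theorem stmt17_general {ι : Type*} [Fintype ι] {d : ℕ} {p : MvPolynomial ι ℝ}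
    (hp : p.totalDegree ≤ d) {B : ℝ} (hB : 1 ≤ B) {X X' : ι → ℝ} (hX : ‖X‖ ≤ B) (hX' : ‖X'‖ ≤ B) :
    |MvPolynomial.eval X p - MvPolynomial.eval X' p| ≤
      ‖X - X'‖ * √(∫ W, MvPolynomial.eval W p ^ 2 ∂Measure.pi fun _ : ι ↦ gaussianReal 0 1) *
        (Fintype.card ι : ℝ) ^ ((d : ℝ) / 2) * (8 * B) ^ d := by
  classical
  cases isEmpty_or_nonempty ι with
  | inl _ => simp [Subsingleton.elim X X']
  | inr _ =>
    set N := √(∫ W, MvPolynomial.eval W p ^ 2 ∂Measure.pi fun _ : ι ↦ gaussianReal 0 1)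
    calc |MvPolynomial.eval X p - MvPolynomial.eval X' p|
        ≤ N * (√(multiIndices ι d).card * ((4 * B) ^ d * ‖X - X'‖)) :=
          abs_eval_sub_eval_le_sqrt_card hp hB hX hX'
      _ ≤ N * (2 ^ d * (Fintype.card ι : ℝ) ^ ((d : ℝ) / 2) * ((4 * B) ^ d * ‖X - X'‖)) := by
          gcongr
          exact sqrt_card_multiIndices_le d
      _ = ‖X - X'‖ * N * (Fintype.card ι : ℝ) ^ ((d : ℝ) / 2) * (8 * B) ^ d := by
          rw [show 8 * B = 2 * (4 * B) by ring, mul_pow 2 (4 * B)]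
          ring

/-- Lipschitz-type bound: if `‖X‖_∞ ≤ B` and `‖X − X'‖_∞ < δ` then
`|p(X) − p(X')| ≤ δ |p|₂ n^{d/2} (C B)^d`. -/
theorem stmt17 :
    ∃ C > (0:ℝ),
      ∀ (n d : ℕ) (p : MvPolynomial (Fin n) ℝ), p.totalDegree ≤ d →
        ∀ B δ : ℝ, 1 < B → 0 < δ → δ < 1 →
          ∀ X X' : Fin n → ℝ, ‖X‖ ≤ B → ‖X - X'‖ < δ →
            |MvPolynomial.eval X p - MvPolynomial.eval X' p| ≤
              δ * gaussNorm n 2 (fun W => MvPolynomial.eval W p) *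
                (n : ℝ) ^ ((d : ℝ) / 2) * (C * B) ^ d := by
  refine ⟨16, by norm_num, fun n d p hp B δ hB _ hδ X X' hX hXX' ↦ ?_⟩
  have hX' : ‖X'‖ ≤ 2 * B := by linarith [norm_le_norm_add_norm_sub X X']
  rw [gaussNorm_two, show 16 * B = 8 * (2 * B) by ring]
  refine (stmt17_general hp (by linarith) (by linarith) hX').trans ?_
  rw [Fintype.card_fin]
  gcongr
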